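/- arXiv:2009.14729 — 3 statements merged into one kernel-verified Lean document; each statement's English description precedes it below -/
import Mathlib

section
/- Chain concatenation bound (the key estimate in the proof of Lemma 2.2): let w be a weight function on a finite vertex set V, let t ≥ 1, σ, β ∈ ℕ, and R, δ ∈ [0,∞]. Suppose r_0, r_1, …, r_t, x_0, …, x_{t−1}, and y_1, …, y_t are vertices such that d_w^{(σ)}(r_j, x_j) ≤ R for all 0 ≤ j ≤ t−1, d_w^{(σ)}(r_j, y_j) ≤ R for all 1 ≤ j ≤ t, and d_w^{(2β+1)}(x_j, y_{j+1}) ≤ δ for all 0 ≤ j ≤ t−1. Then d_w^{(t(2σ+2β+1))}(r_0, r_t) ≤ t·(δ + 2R). -/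
open scoped ENNReal BigOperators

/-- The `t`-hop-bounded distance for a weight function `w` on `V`: the infimum,
over all sequences `u = x 0, x 1, ..., x m = v` with `m <= t`, of
the total weight `Sum_{j<m} w (x j) (x (j+1))`. -/
noncomputable def hopDist {V : Type*} (w : V → V → ℝ≥0∞) (t : ℕ) (u v : V) : ℝ≥0∞ :=
  ⨅ (m : ℕ) (_ : m ≤ t) (x : ℕ → V) (_ : x 0 = u) (_ : x m = v),
    ∑ j ∈ Finset.range m, w (x j) (x (j + 1))

/-- The distance for a weight function `w`: the infimum of hop-bounded distances. -/
noncomputable def graphDist {V : Type*} (w : V → V → ℝ≥0∞) (u v : V) : ℝ≥0∞ :=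
  ⨅ t : ℕ, hopDist w t u v

section HopDist

variable {V : Type*} (w : V → V → ℝ≥0∞)

theorem hopDist_le_sum {m t : ℕ} (hm : m ≤ t) (x : ℕ → V) :
    hopDist w t (x 0) (x m) ≤ ∑ j ∈ Finset.range m, w (x j) (x (j + 1)) :=
  iInf₂_le_of_le m hm <| iInf_le_of_le x <| iInf₂_le_of_le rfl rfl le_rfl

theorem hopDist_self (t : ℕ) (u : V) : hopDist w t u u = 0 :=
  nonpos_iff_eq_zero.mp <| by simpa using hopDist_le_sum w t.zero_le fun _ => u

theorem hopDist_le_sum_add_sum {a b m n : ℕ} (hm : m ≤ a) (hn : n ≤ b) {x y : ℕ → V}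
    (hxy : x m = y 0) :
    hopDist w (a + b) (x 0) (y n) ≤
      ∑ j ∈ Finset.range m, w (x j) (x (j + 1)) + ∑ j ∈ Finset.range n, w (y j) (y (j + 1)) := by
  let z : ℕ → V := fun i => if i < m then x i else y (i - m)
  have z_left {i : ℕ} (hi : i ≤ m) : z i = x i := by
    rcases hi.lt_or_eq with hlt | rfl
    · exact if_pos hlt
    · simp [z, hxy]
  have z_right (i : ℕ) : z (m + i) = y i := by simp [z]
  calc hopDist w (a + b) (x 0) (y n)
      = hopDist w (a + b) (z 0) (z (m + n)) := by rw [z_left m.zero_le, z_right]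
    _ ≤ ∑ j ∈ Finset.range (m + n), w (z j) (z (j + 1)) :=
      hopDist_le_sum w (Nat.add_le_add hm hn) z
    _ = ∑ j ∈ Finset.range m, w (z j) (z (j + 1)) +
          ∑ j ∈ Finset.range n, w (z (m + j)) (z (m + j + 1)) :=
      Finset.sum_range_add _ m n
    _ = _ := by
      congr 1
      · refine Finset.sum_congr rfl fun j hj => ?_
        have hjm : j < m := Finset.mem_range.mp hj
        rw [z_left hjm.le, z_left hjm]
      · simp only [add_assoc, z_right]

theorem hopDist_triangle (a b : ℕ) (u v z : V) :
    hopDist w (a + b) u z ≤ hopDist w a u v + hopDist w b v z := by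
  conv_rhs => simp only [hopDist, ENNReal.iInf_add, ENNReal.add_iInf]
  simp only [le_iInf_iff]
  rintro n hn y hy rfl m hm x rfl hxm
  exact hopDist_le_sum_add_sum w hm hn (hxm.trans hy.symm)

theorem hopDist_sum_le_sum_hopDist (s : ℕ → ℕ) (r : ℕ → V) (t : ℕ) :
    hopDist w (∑ j ∈ Finset.range t, s j) (r 0) (r t) ≤
      ∑ j ∈ Finset.range t, hopDist w (s j) (r j) (r (j + 1)) := by
  induction t with
  | zero => simp [hopDist_self]
  | succ t ih =>
    rw [Finset.sum_range_succ, Finset.sum_range_succ]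
    exact (hopDist_triangle w _ _ _ (r t) _).trans (by gcongr)

theorem hopDist_mul_le_mul {t s : ℕ} {c : ℝ≥0∞} {r : ℕ → V}
    (hr : ∀ j < t, hopDist w s (r j) (r (j + 1)) ≤ c) :
    hopDist w (t * s) (r 0) (r t) ≤ t * c :=
  calc hopDist w (t * s) (r 0) (r t)
      ≤ ∑ j ∈ Finset.range t, hopDist w s (r j) (r (j + 1)) := by
        simpa using hopDist_sum_le_sum_hopDist w (fun _ => s) r t
    _ ≤ ∑ _j ∈ Finset.range t, c := Finset.sum_le_sum fun j hj => hr j (Finset.mem_range.mp hj)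
    _ = t * c := by simp

variable {w}

theorem hopDist_le_hopDist_swap (hsymm : ∀ a b, w a b = w b a) (t : ℕ) (u v : V) :
    hopDist w t u v ≤ hopDist w t v u := by
  conv_rhs => rw [hopDist]
  simp only [le_iInf_iff]
  rintro m hm x rfl rfl
  calc hopDist w t (x m) (x 0)
      ≤ ∑ j ∈ Finset.range m, w (x (m - j)) (x (m - (j + 1))) := by
        simpa using hopDist_le_sum w hm fun i => x (m - i)
    _ = ∑ j ∈ Finset.range m, w (x (m - 1 - j)) (x (m - 1 - j + 1)) := by
        refine Finset.sum_congr rfl fun j hj => ?_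
        have hjm : j < m := Finset.mem_range.mp hj
        rw [hsymm, show m - (j + 1) = m - 1 - j by lia, show m - j = m - 1 - j + 1 by lia]
    _ = ∑ j ∈ Finset.range m, w (x j) (x (j + 1)) :=
        Finset.sum_range_reflect (fun j => w (x j) (x (j + 1))) m

theorem hopDist_comm (hsymm : ∀ a b, w a b = w b a) (t : ℕ) (u v : V) :
    hopDist w t u v = hopDist w t v u :=
  (hopDist_le_hopDist_swap hsymm t u v).antisymm (hopDist_le_hopDist_swap hsymm t v u)

end HopDist

theorem chain_concat_general {V : Type*} (w : V → V → ℝ≥0∞) (t σ k : ℕ) (R δ : ℝ≥0∞)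
    (r x y : ℕ → V)
    (hx : ∀ j < t, hopDist w σ (r j) (x j) ≤ R)
    (hy : ∀ j < t, hopDist w σ (y (j + 1)) (r (j + 1)) ≤ R)
    (hxy : ∀ j < t, hopDist w k (x j) (y (j + 1)) ≤ δ) :
    hopDist w (t * (2 * σ + k)) (r 0) (r t) ≤ t * (δ + 2 * R) := by
  refine hopDist_mul_le_mul w fun j hj => ?_
  calc hopDist w (2 * σ + k) (r j) (r (j + 1))
      = hopDist w (σ + k + σ) (r j) (r (j + 1)) := by congr 1; ring
    _ ≤ hopDist w (σ + k) (r j) (y (j + 1)) + hopDist w σ (y (j + 1)) (r (j + 1)) :=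
      hopDist_triangle w _ _ _ _ _
    _ ≤ hopDist w σ (r j) (x j) + hopDist w k (x j) (y (j + 1)) +
          hopDist w σ (y (j + 1)) (r (j + 1)) := by
      gcongr
      exact hopDist_triangle w _ _ _ _ _
    _ ≤ R + δ + R := by gcongr; exacts [hx j hj, hxy j hj, hy j hj]
    _ = δ + 2 * R := by ring

/-- chain concatenation bound (key estimate in the proof of
Lemma 2.2 of the paper). -/
theorem chain_concat {V : Type*} [Fintype V] (w : V → V → ℝ≥0∞)
    (hsymm : ∀ a b, w a b = w b a)
    (t σ β : ℕ) (ht : 1 ≤ t) (R δ : ℝ≥0∞)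
    (r x y : ℕ → V)
    (hx : ∀ j < t, hopDist w σ (r j) (x j) ≤ R)
    (hy : ∀ j, 1 ≤ j → j ≤ t → hopDist w σ (r j) (y j) ≤ R)
    (hxy : ∀ j < t, hopDist w (2 * β + 1) (x j) (y (j + 1)) ≤ δ) :
    hopDist w (t * (2 * σ + 2 * β + 1)) (r 0) (r t) ≤ (t : ℝ≥0∞) * (δ + 2 * R) := by
  simpa only [add_assoc] using chain_concat_general w t σ (2 * β + 1) R δ r x y hx
    (fun j hj => (hopDist_comm hsymm σ _ _).trans_le (hy (j + 1) j.succ_pos hj)) hxy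
end

section
/- Bound on the number of clusters in the last phase (equation (4) of the paper): let n ≥ 1, κ ≥ 1, and 0 < ρ < 1/2 be real numbers with κρ ≥ 1; set i_0 = ⌊log₂(κρ)⌋ and ℓ = ⌊log₂(κρ)⌋ + ⌈(κ+1)/(κρ)⌉ − 1. Let (p_i)_{i∈ℕ} be a sequence of nonnegative reals such that p_0 ≤ n, p_{i+1} ≤ p_i · n^{−2^i/κ} for all i ≤ i_0, and p_{i+1} ≤ p_i · n^{−ρ} for all i with i_0 + 1 ≤ i ≤ ℓ − 1. Then p_ℓ ≤ n^ρ. -/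
/-!
Work with exponents to base `n`. The exponential stage lowers the exponent of `p 0 ≤ n` by the
geometric sum `(2 ^ (i₀ + 1) - 1) / κ`, which is at least `ρ - 1 / κ` because `κρ ≤ 2 ^ (i₀ + 1)`.
The `c - 2` phases of the fixed stage, with `c = ⌈(κ + 1) / (κρ)⌉`, lower it by a further
`(c - 2)ρ`, and `cρ ≥ 1 + 1 / κ` leaves an exponent of at most `ρ`. The only other possibility is
`c = 1`; then the fixed stage is absent, but `ρ ≥ 1` and `n` is already at most `n ^ ρ`.
-/

open Finset

section RpowDecay

variable {n x κ ρ : ℝ} {p e : ℕ → ℝ} {a k m d : ℕ}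

theorem le_rpow_add_sum_of_le_mul_rpow (hn : 0 < n) (h0 : p 0 ≤ n ^ x)
    (hstep : ∀ i < k, p (i + 1) ≤ p i * n ^ e i) :
    p k ≤ n ^ (x + ∑ i ∈ range k, e i) := by
  induction k with
  | zero => simpa using h0
  | succ k ih =>
    calc p (k + 1) ≤ p k * n ^ e k := hstep k k.lt_succ_self
      _ ≤ n ^ (x + ∑ i ∈ range k, e i) * n ^ e k := by
        gcongr
        exact ih fun i hi => hstep i (hi.trans k.lt_succ_self)
      _ = n ^ (x + ∑ i ∈ range (k + 1), e i) := by
        rw [← Real.rpow_add hn, sum_range_succ, add_assoc]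

theorem le_rpow_of_exponential_stage (hn : 0 < n) (h0 : p 0 ≤ n)
    (hstep : ∀ i < k, p (i + 1) ≤ p i * n ^ (-((2 : ℝ) ^ i) / κ)) :
    p k ≤ n ^ (1 - ((2 : ℝ) ^ k - 1) / κ) := by
  have hsum : ∑ i ∈ range k, -((2 : ℝ) ^ i) / κ = -(((2 : ℝ) ^ k - 1) / κ) := by
    rw [← sum_div, sum_neg_distrib, geom_sum_eq (by norm_num)]
    ring
  rw [sub_eq_add_neg, ← hsum]
  exact le_rpow_add_sum_of_le_mul_rpow hn (by rwa [Real.rpow_one]) hstep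

theorem le_rpow_of_fixed_stage (hn : 0 < n) (ha : p a ≤ n ^ x)
    (hstep : ∀ i, a ≤ i → i < a + d → p (i + 1) ≤ p i * n ^ (-ρ)) :
    p (a + d) ≤ n ^ (x - d * ρ) := by
  have hshift := le_rpow_add_sum_of_le_mul_rpow (p := fun j => p (a + j)) (e := fun _ => -ρ)
    hn ha fun j (hj : j < d) => hstep (a + j) (by lia) (by lia)
  simpa [sub_eq_add_neg] using hshift

theorem two_stage_exponent_le (hκ : 0 < κ) {t s : ℝ} (ht : κ * ρ ≤ t)
    (hs : κ + 1 ≤ (s + 2) * (κ * ρ)) :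
    1 - (t - 1) / κ - s * ρ ≤ ρ := by
  have hdiv : 1 - s * ρ - ρ ≤ (t - 1) / κ := by
    rw [le_div_iff₀ hκ]
    linarith
  linarith

theorem le_rpow_of_two_stages (hn : 1 ≤ n) (hκ : 0 < κ) (h0 : p 0 ≤ n)
    (hm : κ * ρ ≤ 2 ^ (m + 1)) (hd : κ + 1 ≤ (d + 2) * (κ * ρ))
    (hexp : ∀ i ≤ m, p (i + 1) ≤ p i * n ^ (-((2 : ℝ) ^ i) / κ))
    (hfix : ∀ i, m + 1 ≤ i → i < m + 1 + d → p (i + 1) ≤ p i * n ^ (-ρ)) :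
    p (m + 1 + d) ≤ n ^ ρ := by
  have hn0 : 0 < n := by linarith
  have hexp_end : p (m + 1) ≤ n ^ (1 - ((2 : ℝ) ^ (m + 1) - 1) / κ) :=
    le_rpow_of_exponential_stage hn0 h0 fun i hi => hexp i (Nat.lt_succ_iff.mp hi)
  exact (le_rpow_of_fixed_stage hn0 hexp_end hfix).trans <|
    Real.rpow_le_rpow_of_exponent_le hn (two_stage_exponent_le hκ hm hd)

theorem le_self_of_exponential_stage (hn : 1 ≤ n) (hκ : 0 < κ) (h0 : p 0 ≤ n)
    (hstep : ∀ i < k, p (i + 1) ≤ p i * n ^ (-((2 : ℝ) ^ i) / κ)) :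
    p k ≤ n := by
  have hdrop : 0 ≤ ((2 : ℝ) ^ k - 1) / κ :=
    div_nonneg (sub_nonneg.mpr (one_le_pow₀ one_le_two)) hκ.le
  calc p k ≤ n ^ (1 - ((2 : ℝ) ^ k - 1) / κ) :=
        le_rpow_of_exponential_stage (by linarith) h0 hstep
    _ ≤ n ^ (1 : ℝ) := Real.rpow_le_rpow_of_exponent_le hn (by linarith)
    _ = n := Real.rpow_one n

end RpowDecay

theorem lt_pow_floor_logb_add_one {b x : ℝ} (hb : 1 < b) (hx : 0 < x) :
    x < b ^ (⌊Real.logb b x⌋₊ + 1) := by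
  have hlog := Nat.lt_floor_add_one (Real.logb b x)
  rw [Real.logb_lt_iff_lt_rpow hb hx] at hlog
  exact_mod_cast hlog

theorem last_phase_bound_general (n κ ρ : ℝ) (hn : 1 ≤ n) (hκ : 0 < κ) (hκρ : 1 ≤ κ * ρ)
    (p : ℕ → ℝ) (h0 : p 0 ≤ n)
    (hrec1 : ∀ i ≤ ⌊Real.logb 2 (κ * ρ)⌋₊,
      p (i + 1) ≤ p i * n ^ (-((2 : ℝ) ^ i) / κ))
    (hrec2 : ∀ i, ⌊Real.logb 2 (κ * ρ)⌋₊ + 1 ≤ i →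
      i ≤ (⌊Real.logb 2 (κ * ρ)⌋₊ + ⌈(κ + 1) / (κ * ρ)⌉₊ - 1) - 1 →
      p (i + 1) ≤ p i * n ^ (-ρ)) :
    p (⌊Real.logb 2 (κ * ρ)⌋₊ + ⌈(κ + 1) / (κ * ρ)⌉₊ - 1) ≤ n ^ ρ := by
  have hκρ0 : 0 < κ * ρ := by linarith
  have hm := (lt_pow_floor_logb_add_one one_lt_two hκρ0).le
  have hc := (div_le_iff₀ hκρ0).mp (Nat.le_ceil ((κ + 1) / (κ * ρ)))
  have hc_pos : 0 < ⌈(κ + 1) / (κ * ρ)⌉₊ := Nat.ceil_pos.mpr (by positivity)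
  generalize ⌊Real.logb 2 (κ * ρ)⌋₊ = m at *
  generalize ⌈(κ + 1) / (κ * ρ)⌉₊ = c at *
  obtain rfl | ⟨d, rfl⟩ : c = 1 ∨ ∃ d, c = d + 2 := by
    rcases c with _ | _ | d <;> simp at hc_pos ⊢
  · have hρ : 1 ≤ ρ := by
      rw [Nat.cast_one, one_mul] at hc
      exact le_of_mul_le_mul_left (by linarith) hκ
    exact (le_self_of_exponential_stage hn hκ h0 fun i hi => hrec1 i (by lia)).trans
      (Real.self_le_rpow_of_one_le hn hρ)
  · rw [show m + (d + 2) - 1 = m + 1 + d by lia]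
    exact le_rpow_of_two_stages hn hκ h0 hm (by exact_mod_cast hc) hrec1
      fun i hmi hid => hrec2 i hmi (by lia)

/-- bound on the number of clusters in the last phase
(equation (4) of the paper). -/
theorem last_phase_bound (n κ ρ : ℝ) (hn : 1 ≤ n) (hκ : 1 ≤ κ)
    (hρ0 : 0 < ρ) (hρ : ρ < 1 / 2) (hκρ : 1 ≤ κ * ρ)
    (p : ℕ → ℝ) (hp : ∀ i, 0 ≤ p i) (h0 : p 0 ≤ n)
    (hrec1 : ∀ i ≤ ⌊Real.logb 2 (κ * ρ)⌋₊,
      p (i + 1) ≤ p i * n ^ (-((2 : ℝ) ^ i) / κ))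
    (hrec2 : ∀ i, ⌊Real.logb 2 (κ * ρ)⌋₊ + 1 ≤ i →
      i ≤ (⌊Real.logb 2 (κ * ρ)⌋₊ + ⌈(κ + 1) / (κ * ρ)⌉₊ - 1) - 1 →
      p (i + 1) ≤ p i * n ^ (-ρ)) :
    p (⌊Real.logb 2 (κ * ρ)⌋₊ + ⌈(κ + 1) / (κ * ρ)⌉₊ - 1) ≤ n ^ ρ :=
  last_phase_bound_general n κ ρ hn (by linarith) hκρ p h0 hrec1 hrec2
end

section
/- Path segmentation lemma (the estimate culminating in equation (10) of the paper): let w and w' be weight functions on a finite vertex set V with w'(u,v) ≤ w(u,v) for all u,v. Let A ≥ 1, B ≥ 0, and δ > 0 be real numbers and h ≥ 1 a natural number. Let x = u_0, u_1, …, u_m = y (m ≥ 1) be a shortest path for w, i.e., Σ_{j<m} w(u_j, u_{j+1}) = d_w(x,y), with 0 < d_w(x,y) < ∞, and suppose that for all indices 0 ≤ a ≤ b ≤ m with d_w(u_a, u_b) ≤ δ one has d_{w'}^{(h)}(u_a, u_b) ≤ A·d_w(u_a, u_b) + B. Then, setting q = ⌈d_w(x,y)/δ⌉, one has d_{w'}^{(q(h+1)−1)}(x,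 y) ≤ A·d_w(x,y) + q·B. -/
open scoped ENNReal BigOperators

/-!
Cut the path greedily: starting from the current vertex, take the longest initial piece whose
`w`-length is at most `δ`. That piece is covered by `h` hops of `w'` at additive cost `B`, and the
edge following it by one more hop. The piece together with this edge has `w`-length exceeding `δ`,
so each round of `h + 1` hops uses up more than `δ` of the length. A path of length at most `q * δ`
is therefore exhausted after `q - 1` full rounds and one last piece, which needs no closing edge:
this is where the `- 1` in the hop bound `q * (h + 1) - 1` comes from.
-/

section PathLength

variable {V : Type*} (w : V → V → ℝ≥0∞)

/-- The `w`-length of the portion of the sequence `u` between the indices `a` and `b`. It is `0`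
when `b ≤ a`. -/
noncomputable def pathLength (u : ℕ → V) (a b : ℕ) : ℝ≥0∞ :=
  ∑ j ∈ Finset.Ico a b, w (u j) (u (j + 1))

theorem pathLength_self (u : ℕ → V) (a : ℕ) : pathLength w u a a = 0 := by
  simp [pathLength]

theorem pathLength_self_succ (u : ℕ → V) (a : ℕ) :
    pathLength w u a (a + 1) = w (u a) (u (a + 1)) := by
  simp [pathLength]

theorem pathLength_add_pathLength (u : ℕ → V) {a b c : ℕ} (hab : a ≤ b) (hbc : b ≤ c) :
    pathLength w u a b + pathLength w u b c = pathLength w u a c :=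
  Finset.sum_Ico_consecutive _ hab hbc

theorem pathLength_shift (u : ℕ → V) (k a b : ℕ) :
    pathLength w (fun j ↦ u (k + j)) a b = pathLength w u (k + a) (k + b) := by
  simp only [pathLength, ← add_assoc, add_comm k a, add_comm k b]
  exact Finset.sum_Ico_add (fun j ↦ w (u j) (u (j + 1))) a b k

theorem pathLength_congr {u v : ℕ → V} {a b : ℕ} (huv : ∀ j, a ≤ j → j ≤ b → u j = v j) :
    pathLength w u a b = pathLength w v a b := by
  refine Finset.sum_congr rfl fun j hj ↦ ?_
  obtain ⟨haj, hjb⟩ := Finset.mem_Ico.mp hj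
  rw [huv j haj hjb.le, huv (j + 1) (Nat.le_succ_of_le haj) hjb]

theorem exists_pathLength_concat (p r : ℕ → V) {k : ℕ} (hpr : p k = r 0) (l : ℕ) :
    ∃ z : ℕ → V, z 0 = p 0 ∧ z (k + l) = r l ∧
      pathLength w z 0 (k + l) = pathLength w p 0 k + pathLength w r 0 l := by
  let z : ℕ → V := fun j ↦ if j ≤ k then p j else r (j - k)
  have z_left : ∀ j ≤ k, z j = p j := fun j hj ↦ if_pos hj
  have z_right : (fun j ↦ z (k + j)) = r := by
    funext j
    rcases j.eq_zero_or_pos with rfl | hj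
    · exact (z_left k le_rfl).trans hpr
    · simp [z, hj.ne']
  refine ⟨z, z_left 0 k.zero_le, congrFun z_right l, ?_⟩
  rw [← pathLength_add_pathLength w z k.zero_le (k.le_add_right l),
    pathLength_congr w fun j _ ↦ z_left j]
  congr 1
  simpa only [z_right, add_zero] using (pathLength_shift w z k 0 l).symm

theorem exists_pathLength_le_lt_succ (u : ℕ → V) {a m : ℕ} {δ : ℝ≥0∞} (ham : a ≤ m)
    (hδ : δ < pathLength w u a m) :
    ∃ b, a ≤ b ∧ b < m ∧ pathLength w u a b ≤ δ ∧ δ < pathLength w u a (b + 1) := by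
  by_contra! hstay
  have hshort : ∀ b, a ≤ b → b ≤ m → pathLength w u a b ≤ δ := by
    intro b hab
    induction b, hab using Nat.le_induction with
    | base => simp [pathLength_self]
    | succ b hab ih => exact fun hbm ↦ hstay b hab hbm (ih (Nat.le_of_succ_le hbm))
  exact (hshort m ham le_rfl).not_gt hδ

end PathLength

section HopDist

variable {V : Type*} (w : V → V → ℝ≥0∞)

theorem hopDist_le_pathLength (u : ℕ → V) {a b t : ℕ} (hab : a ≤ b) (hbt : b ≤ a + t) :
    hopDist w t (u a) (u b) ≤ pathLength w u a b := by
  obtain ⟨k, rfl⟩ := Nat.exists_eq_add_of_le hab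
  calc hopDist w t (u a) (u (a + k))
      ≤ ∑ j ∈ Finset.range k, w (u (a + j)) (u (a + (j + 1))) :=
        iInf₂_le_of_le k (Nat.le_of_add_le_add_left hbt) <|
          iInf_le_of_le (fun j ↦ u (a + j)) <| iInf₂_le_of_le rfl rfl le_rfl
    _ = pathLength w u a (a + k) := by
        rw [Finset.range_eq_Ico]
        exact pathLength_shift w u a 0 k

theorem graphDist_le_pathLength (u : ℕ → V) {a b : ℕ} (hab : a ≤ b) :
    graphDist w (u a) (u b) ≤ pathLength w u a b :=
  iInf_le_of_le b (hopDist_le_pathLength w u hab (Nat.le_add_left b a))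

theorem hopDist_antitone (a b : V) : Antitone fun t ↦ hopDist w t a b :=
  fun _ _ hst ↦ biInf_mono fun _ hk ↦ hk.trans hst

theorem hopDist_add_le (s t : ℕ) (a b c : V) :
    hopDist w (s + t) a c ≤ hopDist w s a b + hopDist w t b c := by
  simp only [hopDist.eq_def w s, hopDist.eq_def w t, ENNReal.iInf_add, ENNReal.add_iInf,
    le_iInf_iff]
  rintro l hl r hrb rfl k hk p rfl hpb
  obtain ⟨z, hz₀, hz, hlen⟩ := exists_pathLength_concat w p r (hpb.trans hrb.symm) l
  simp only [Finset.range_eq_Ico]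
  rw [← hz₀, ← hz]
  exact (hopDist_le_pathLength w z (Nat.zero_le _) (by omega)).trans_eq hlen

end HopDist

theorem le_natCeil_toReal_div_mul {D : ℝ≥0∞} (hD : D ≠ ⊤) {δ : ℝ} (hδ : 0 < δ) :
    D ≤ ⌈D.toReal / δ⌉₊ * ENNReal.ofReal δ := by
  rw [← ENNReal.ofReal_natCast, ← ENNReal.ofReal_mul (Nat.cast_nonneg _)]
  have hreal : D.toReal ≤ ⌈D.toReal / δ⌉₊ * δ := (div_le_iff₀ hδ).mp (Nat.le_ceil _)
  exact (ENNReal.le_ofReal_iff_toReal_le hD (by positivity)).mpr hreal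

section Segmentation

variable {V : Type*} {w w' : V → V → ℝ≥0∞} {A B : ℝ≥0∞} {h m : ℕ} {u : ℕ → V}

theorem hopDist_le_of_segment_of_edge {a b s t : ℕ} {C : ℝ≥0∞} (hab : a ≤ b) (hbm : b < m)
    (hfirst : hopDist w' s (u a) (u b) ≤ A * pathLength w u a b + B)
    (hedge : w' (u b) (u (b + 1)) ≤ A * w (u b) (u (b + 1)))
    (hrest : hopDist w' t (u (b + 1)) (u m) ≤ A * pathLength w u (b + 1) m + C) :
    hopDist w' (s + 1 + t) (u a) (u m) ≤ A * pathLength w u a m + (B + C) := by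
  have hhop : hopDist w' 1 (u b) (u (b + 1)) ≤ A * pathLength w u b (b + 1) := by
    refine (hopDist_le_pathLength w' u b.le_succ le_rfl).trans ?_
    rwa [pathLength_self_succ, pathLength_self_succ]
  calc hopDist w' (s + 1 + t) (u a) (u m)
      ≤ hopDist w' s (u a) (u b) + hopDist w' 1 (u b) (u (b + 1)) +
          hopDist w' t (u (b + 1)) (u m) :=
        (hopDist_add_le w' (s + 1) t _ (u (b + 1)) _).trans
          (add_le_add_left (hopDist_add_le w' s 1 _ _ _) _)
    _ ≤ (A * pathLength w u a b + B) + A * pathLength w u b (b + 1) +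
          (A * pathLength w u (b + 1) m + C) := by gcongr
    _ = A * (pathLength w u a b + pathLength w u b (b + 1) + pathLength w u (b + 1) m) +
          (B + C) := by ring
    _ = A * pathLength w u a m + (B + C) := by
        rw [pathLength_add_pathLength w u hab b.le_succ,
          pathLength_add_pathLength w u (hab.trans b.le_succ) hbm]

theorem hopDist_le_of_pathLength_le_mul {δ : ℝ≥0∞}
    (hedge : ∀ j < m, w' (u j) (u (j + 1)) ≤ A * w (u j) (u (j + 1)))
    (hseg : ∀ a b : ℕ, a ≤ b → b ≤ m → pathLength w u a b ≤ δ →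
      hopDist w' h (u a) (u b) ≤ A * pathLength w u a b + B)
    (q : ℕ) {a : ℕ} (ham : a ≤ m) (hlen : pathLength w u a m ≤ (q + 1) * δ) :
    hopDist w' (q * (h + 1) + h) (u a) (u m) ≤ A * pathLength w u a m + (q + 1) * B := by
  induction q generalizing a with
  | zero => simpa using hseg a m ham le_rfl (by simpa using hlen)
  | succ q ih =>
    rcases le_or_gt (pathLength w u a m) δ with hshort | hlong
    · calc hopDist w' ((q + 1) * (h + 1) + h) (u a) (u m)
          ≤ hopDist w' h (u a) (u m) := hopDist_antitone w' _ _ (Nat.le_add_left _ _)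
        _ ≤ A * pathLength w u a m + B := hseg a m ham le_rfl hshort
        _ ≤ A * pathLength w u a m + ((q + 1 : ℕ) + 1) * B := by
            gcongr
            exact le_mul_of_one_le_left' le_add_self
    · obtain ⟨b, hab, hbm, hle, hlt⟩ := exists_pathLength_le_lt_succ w u ham hlong
      have hrest : pathLength w u (b + 1) m ≤ (q + 1) * δ := by
        by_contra! hgt
        refine hlen.not_gt ?_
        calc ((q + 1 : ℕ) + 1) * δ = δ + (q + 1) * δ := by push_cast; ring
          _ < pathLength w u a (b + 1) + pathLength w u (b + 1) m := ENNReal.add_lt_add hlt hgt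
          _ = pathLength w u a m := pathLength_add_pathLength w u (hab.trans b.le_succ) hbm
      have hstep := hopDist_le_of_segment_of_edge hab hbm (hseg a b hab hbm.le hle)
        (hedge b hbm) (ih hbm hrest)
      convert hstep using 2
      · ring
      · push_cast; ring

theorem path_segmentation_general {δ : ℝ} (hδ : 0 < δ)
    (hedge : ∀ j < m, w' (u j) (u (j + 1)) ≤ A * w (u j) (u (j + 1)))
    (hpos : 0 < pathLength w u 0 m) (hfin : pathLength w u 0 m < ⊤)
    (hseg : ∀ a b : ℕ, a ≤ b → b ≤ m → graphDist w (u a) (u b) ≤ ENNReal.ofReal δ →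
      hopDist w' h (u a) (u b) ≤ A * graphDist w (u a) (u b) + B) :
    hopDist w' (⌈(pathLength w u 0 m).toReal / δ⌉₊ * (h + 1) - 1) (u 0) (u m) ≤
      A * pathLength w u 0 m + ⌈(pathLength w u 0 m).toReal / δ⌉₊ * B := by
  have hseg' : ∀ a b : ℕ, a ≤ b → b ≤ m → pathLength w u a b ≤ ENNReal.ofReal δ →
      hopDist w' h (u a) (u b) ≤ A * pathLength w u a b + B := by
    intro a b hab hbm hlen
    have hdist := graphDist_le_pathLength w u hab
    exact (hseg a b hab hbm (hdist.trans hlen)).trans (by gcongr)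
  have hlen := le_natCeil_toReal_div_mul hfin.ne hδ
  have hq : 0 < ⌈(pathLength w u 0 m).toReal / δ⌉₊ :=
    Nat.ceil_pos.mpr (div_pos (ENNReal.toReal_pos hpos.ne' hfin.ne) hδ)
  obtain ⟨q, hq⟩ := Nat.exists_eq_add_one.mpr hq
  rw [hq, Nat.cast_add_one] at hlen ⊢
  rw [add_one_mul, ← add_assoc, Nat.add_sub_cancel]
  exact hopDist_le_of_pathLength_le_mul hedge hseg' q m.zero_le hlen

end Segmentation

/-- path segmentation lemma (the estimate culminating in
equation (10) of the paper). -/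
theorem path_segmentation {V : Type*} [Fintype V] (w w' : V → V → ℝ≥0∞)
    (hwsymm : ∀ a b, w a b = w b a) (hw'symm : ∀ a b, w' a b = w' b a)
    (hle : ∀ a b, w' a b ≤ w a b)
    (A B δ : ℝ) (hA : 1 ≤ A) (hB : 0 ≤ B) (hδ : 0 < δ)
    (h : ℕ) (hh1 : 1 ≤ h)
    (x y : V) (m : ℕ) (hm : 1 ≤ m) (u : ℕ → V) (hu0 : u 0 = x) (hum : u m = y)
    (hpath : ∑ j ∈ Finset.range m, w (u j) (u (j + 1)) = graphDist w x y)
    (hpos : 0 < graphDist w x y) (hfin : graphDist w x y < ⊤)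
    (hseg : ∀ a b : ℕ, a ≤ b → b ≤ m →
      graphDist w (u a) (u b) ≤ ENNReal.ofReal δ →
      hopDist w' h (u a) (u b) ≤
        ENNReal.ofReal A * graphDist w (u a) (u b) + ENNReal.ofReal B) :
    hopDist w' (⌈(graphDist w x y).toReal / δ⌉₊ * (h + 1) - 1) x y ≤
      ENNReal.ofReal A * graphDist w x y +
        (⌈(graphDist w x y).toReal / δ⌉₊ : ℝ≥0∞) * ENNReal.ofReal B := by
  subst hu0 hum
  rw [Finset.range_eq_Ico] at hpath
  rw [← hpath] at hpos hfin ⊢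
  exact path_segmentation_general hδ (fun j _ ↦ (hle _ _).trans
    (le_mul_of_one_le_left' (ENNReal.one_le_ofReal.mpr hA))) hpos hfin hseg
end
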